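/- arXiv:1311.1193 — 3 statements merged into one kernel-verified Lean document; each statement's English description precedes it below -/
import Mathlib

section
/- Let p be a natural number with p > 1 and let J = (J_k)_{k∈ℕ} be a sequence of integers with J_0 = 0 and J_{k+1} ≡ J_k (mod p^k) for all k. Then the operation ⊞ makes ℤ × ℤ[1/p] into an abelian group 𝒬_J with identity (0,0); the map ℤ → 𝒬_J, z ↦ (z,0), is an injective group homomorphism; the map 𝒬_J → ℤ[1/p], (z,r) ↦ r, is a surjective group homomorphism; and the kernel of the latter equals the image of the former. Thus 𝒬_J is an abelian extension of ℤ[1/p] by ℤ. -/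
open scoped Real

/-- The additive subgroup `ℤ[1/p]` of `ℚ` of `p`-adic rationals. -/
def pAdicRat (p : ℕ) : AddSubgroup ℚ where
  carrier := {r : ℚ | ∃ (z : ℤ) (k : ℕ), r * (p : ℚ) ^ k = z}
  zero_mem' := ⟨0, 0, by simp⟩
  add_mem' := by
    rintro a b ⟨z1, k1, h1⟩ ⟨z2, k2, h2⟩
    refine ⟨z1 * (p : ℤ) ^ k2 + z2 * (p : ℤ) ^ k1, k1 + k2, ?_⟩
    push_cast
    calc (a + b) * (p : ℚ) ^ (k1 + k2)
        = (a * (p : ℚ) ^ k1) * (p : ℚ) ^ k2 + (b * (p : ℚ) ^ k2) * (p : ℚ) ^ k1 := by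
          rw [pow_add]; ring
      _ = (z1 : ℚ) * (p : ℚ) ^ k2 + (z2 : ℚ) * (p : ℚ) ^ k1 := by rw [h1, h2]
  neg_mem' := by
    rintro a ⟨z, k, h⟩
    exact ⟨-z, k, by push_cast; rw [neg_mul, h]⟩

/-- `q / p^k` is the reduced form of the rational `r`: it represents `r` and either `k = 0`
or `p` does not divide `q`. -/
def IsReducedForm (p : ℕ) (r : ℚ) (q : ℤ) (k : ℕ) : Prop :=
  r = (q : ℚ) / (p : ℚ) ^ k ∧ (k = 0 ∨ ¬ ((p : ℤ) ∣ q))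

/-- The sequence of integers `J` defines a `p`-adic integer: `J 0 = 0` and
`J (k+1) ≡ J k (mod p^k)` for all `k`. -/
def IsPAdicSeq (p : ℕ) (J : ℕ → ℤ) : Prop :=
  J 0 = 0 ∧ ∀ k : ℕ, (p : ℤ) ^ k ∣ (J (k + 1) - J k)

/-- The defining formula for the Schur multiplier `ξ_J` of `ℤ[1/p]`, written via reduced
forms of the arguments. -/
def XiJFormula (p : ℕ) (J : ℕ → ℤ) (ξ : pAdicRat p → pAdicRat p → ℚ) : Prop :=
  ∀ (r s : pAdicRat p) (q1 : ℤ) (k1 : ℕ) (q2 : ℤ) (k2 : ℕ),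
    IsReducedForm p (r : ℚ) q1 k1 → IsReducedForm p (s : ℚ) q2 k2 →
      (k1 < k2 → ξ r s = -((q1 : ℚ) / (p : ℚ) ^ k1) * ((J k2 : ℚ) - J k1)) ∧
      (k2 < k1 → ξ r s = -((q2 : ℚ) / (p : ℚ) ^ k2) * ((J k1 : ℚ) - J k2)) ∧
      (k1 = k2 → ∀ (q : ℤ) (m : ℕ), IsReducedForm p ((r : ℚ) + (s : ℚ)) q m →
        ξ r s = ((q : ℚ) / (p : ℚ) ^ m) * ((J k1 : ℚ) - J m))

/-- The group operation `⊞` of `𝒬_J` on `ℤ × ℤ[1/p]`: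
`(z1, r1) ⊞ (z2, r2) = (z1 + z2 + ξ_J(r1, r2), r1 + r2)`. -/
def qOp (p : ℕ) (ξ : pAdicRat p → pAdicRat p → ℤ) :
    ℤ × pAdicRat p → ℤ × pAdicRat p → ℤ × pAdicRat p :=
  fun a b => (a.1 + b.1 + ξ a.2 b.2, a.2 + b.2)

theorem exists_reduced (p : ℕ) (hp : 1 < p) (r : pAdicRat p) :
    ∃ (q : ℤ) (k : ℕ), IsReducedForm p (r : ℚ) q k := by
  classical
  have hp0 : (p : ℚ) ≠ 0 := by exact_mod_cast (by omega : p ≠ 0)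
  have h : ∃ k : ℕ, ∃ z : ℤ, (r : ℚ) * (p : ℚ) ^ k = z := by
    obtain ⟨z, k, hz⟩ := r.2
    exact ⟨k, z, hz⟩
  obtain ⟨z, hz⟩ := Nat.find_spec h
  refine ⟨z, Nat.find h, ?_, ?_⟩
  · rw [← hz]; field_simp
  · by_cases h0 : Nat.find h = 0
    · exact Or.inl h0
    · right
      rintro ⟨w, hw⟩
      refine Nat.find_min h (m := Nat.find h - 1) (by omega) ⟨w, ?_⟩
      obtain ⟨n, hn⟩ := Nat.exists_eq_succ_of_ne_zero h0
      rw [hn] at hz ⊢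
      rw [hw] at hz
      push_cast at hz
      simp only [Nat.succ_eq_add_one, Nat.add_sub_cancel] at hz ⊢
      apply mul_left_cancel₀ hp0
      rw [← hz]; ring

theorem reduced_le (p : ℕ) (hp : 1 < p) (r : ℚ) (q q' : ℤ) (k k' : ℕ)
    (h : IsReducedForm p r q k) (h' : IsReducedForm p r q' k') : k ≤ k' := by
  have hp0 : (p : ℚ) ≠ 0 := by exact_mod_cast (by omega : p ≠ 0)
  by_contra! hlt
  obtain ⟨n, rfl⟩ := Nat.exists_eq_add_of_lt hlt
  rcases h.2 with h0 | h0
  · omega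
  · apply h0
    refine ⟨q' * p ^ n, ?_⟩
    have e := h.1.symm.trans h'.1
    rw [div_eq_div_iff (by positivity) (by positivity)] at e
    have : (q : ℚ) = p * (q' * p ^ n) := by
      apply mul_right_cancel₀ (pow_ne_zero k' hp0)
      rw [e]; ring
    exact_mod_cast this

theorem reduced_add (p : ℕ) (hp : 1 < p) (r s : ℚ) (q1 q2 : ℤ) (k1 k2 : ℕ)
    (h1 : IsReducedForm p r q1 k1) (h2 : IsReducedForm p s q2 k2) (h : k1 < k2) :
    ∃ q, IsReducedForm p (r + s) q k2 := by
  have hp0 : (p : ℚ) ≠ 0 := by exact_mod_cast (by omega : p ≠ 0)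
  obtain ⟨n, rfl⟩ := Nat.exists_eq_add_of_lt h
  refine ⟨q1 * p ^ (n + 1) + q2, ?_, Or.inr ?_⟩
  · rw [h1.1, h2.1]; push_cast; field_simp; ring
  · intro hd
    rcases h2.2 with h0 | h0
    · omega
    · apply h0
      have : (p : ℤ) ∣ q1 * p ^ (n + 1) := Dvd.intro_left (q1 * p ^ n) (by ring)
      exact (dvd_add_right this).1 hd

theorem xi_coboundary (p : ℕ) (hp : 1 < p) (J : ℕ → ℤ) (ξ : pAdicRat p → pAdicRat p → ℤ)
    (hξ : XiJFormula p J (fun r s => (ξ r s : ℚ))) :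
    ∃ f : pAdicRat p → ℚ, f 0 = 0 ∧ ∀ r s, (ξ r s : ℚ) = f r + f s - f (r + s) := by
  choose q k hk using exists_reduced p hp
  refine ⟨fun r => (r : ℚ) * J (k r), by simp, fun r s => ?_⟩
  obtain ⟨a, b, c⟩ := hξ r s _ _ _ _ (hk r) (hk s)
  have hrs := hk (r + s)
  have key : ∀ q' k', IsReducedForm p ((r : ℚ) + s) q' k' → k (r + s) = k' := fun q' k' h' =>
    le_antisymm (reduced_le p hp _ _ _ _ _ hrs h') (reduced_le p hp _ _ _ _ _ h' hrs)
  rw [← (hk r).1] at a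
  rw [← (hk s).1] at b
  simp only [AddSubgroup.coe_add]
  rcases lt_trichotomy (k r) (k s) with h | h | h
  · obtain ⟨q', h'⟩ := reduced_add p hp _ _ _ _ _ _ (hk r) (hk s) h
    rw [key _ _ h']
    have := a h
    simp only at this
    rw [this]; ring
  · have := c h _ _ hrs
    rw [← hrs.1] at this
    simp only [AddSubgroup.coe_add] at this
    rw [this, ← h]; ring
  · obtain ⟨q', h'⟩ := reduced_add p hp _ _ _ _ _ _ (hk s) (hk r) h
    rw [add_comm] at h'
    rw [key _ _ h']
    have := b h
    simp only at this
    rw [this]; ring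

/-- For `p > 1` and a `p`-adic integer `J`, the operation `⊞` makes
`ℤ × ℤ[1/p]` into an abelian group `𝒬_J` with identity `(0,0)`; `z ↦ (z,0)` is an
injective group homomorphism into it, `(z,r) ↦ r` is a surjective group homomorphism
onto `ℤ[1/p]`, and the kernel of the latter is the image of the former: `𝒬_J` is an
abelian extension of `ℤ[1/p]` by `ℤ`. -/
theorem qJ_is_abelian_extension (p : ℕ) (hp : 1 < p) (J : ℕ → ℤ) (hJ : IsPAdicSeq p J)
    (ξ : pAdicRat p → pAdicRat p → ℤ)
    (hξ : XiJFormula p J (fun r s => (ξ r s : ℚ))) :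
    (∀ a b : ℤ × pAdicRat p, qOp p ξ a b = qOp p ξ b a) ∧
    (∀ a b c : ℤ × pAdicRat p, qOp p ξ (qOp p ξ a b) c = qOp p ξ a (qOp p ξ b c)) ∧
    (∀ a : ℤ × pAdicRat p, qOp p ξ a (0, 0) = a) ∧
    (∀ a : ℤ × pAdicRat p, ∃ b : ℤ × pAdicRat p, qOp p ξ a b = (0, 0)) ∧
    Function.Injective (fun z : ℤ => ((z, 0) : ℤ × pAdicRat p)) ∧
    (∀ z1 z2 : ℤ, ((z1 + z2, 0) : ℤ × pAdicRat p) = qOp p ξ (z1, 0) (z2, 0)) ∧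
    Function.Surjective (fun a : ℤ × pAdicRat p => a.2) ∧
    (∀ a b : ℤ × pAdicRat p, (qOp p ξ a b).2 = a.2 + b.2) ∧
    (∀ a : ℤ × pAdicRat p, a.2 = 0 ↔ ∃ z : ℤ, a = (z, 0)) := by
  obtain ⟨f, f0, hf⟩ := xi_coboundary p hp J ξ hξ
  have hz : ∀ r, ξ r 0 = 0 := fun r => by
    have := hf r 0
    rw [f0, add_zero, add_zero, sub_self] at this
    exact_mod_cast this
  refine ⟨?_, ?_, ?_, ?_, ?_, ?_, ?_, ?_, ?_⟩
  · intro a b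
    have : ξ a.2 b.2 = ξ b.2 a.2 := by
      have : (ξ a.2 b.2 : ℚ) = ξ b.2 a.2 := by
        rw [hf, hf, add_comm b.2 a.2]; ring
      exact_mod_cast this
    simp only [qOp, this, add_comm]
  · intro a b c
    have : ξ a.2 b.2 + ξ (a.2 + b.2) c.2 = ξ b.2 c.2 + ξ a.2 (b.2 + c.2) := by
      have : (ξ a.2 b.2 + ξ (a.2 + b.2) c.2 : ℚ) = ξ b.2 c.2 + ξ a.2 (b.2 + c.2) := by
        rw [hf, hf, hf, hf, add_assoc a.2 b.2 c.2]; ring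
      exact_mod_cast this
    apply Prod.ext
    · simp only [qOp]; linarith
    · simp only [qOp, add_assoc]
  · intro a
    simp [qOp, hz]
  · intro a
    refine ⟨(-a.1 - ξ a.2 (-a.2), -a.2), ?_⟩
    apply Prod.ext
    · simp only [qOp]; ring
    · simp [qOp]
  · intro a b h
    exact (Prod.ext_iff.1 h).1
  · intro a b
    simp [qOp, hz]
  · intro r
    exact ⟨(0, r), rfl⟩
  · intro a b
    rfl
  · intro a
    constructor
    · intro h
      exact ⟨a.1, Prod.ext rfl h⟩
    · rintro ⟨z, rfl⟩
      rfl
end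

section
/- Let p be a natural number with p > 1, let α ∈ Ξ_p, and set J_k = p^k·α_k − α_0 for all k (so J = (J_k) is a sequence of integers with J_0 = 0 and J_{k+1} ≡ J_k (mod p^k)). Then there exists a unique group homomorphism τ : 𝒬_J → ℝ such that τ(1,0) = 1 and τ(0, 1/p^k) = α_k for all k ∈ ℕ. -/
open scoped Real

lemma pAdicElem_mem (p : ℕ) (q : ℤ) (k : ℕ) : ((q : ℚ) / (p : ℚ) ^ k) ∈ pAdicRat p := by
  rcases Nat.eq_zero_or_pos p with h | h
  · exact ⟨0, 1, by simp [h]⟩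
  · refine ⟨q, k, ?_⟩
    have : ((p : ℚ)) ^ k ≠ 0 := by positivity
    field_simp

/-- The element `q / p^k` of `ℤ[1/p]`. -/
def pAdicElem (p : ℕ) (q : ℤ) (k : ℕ) : pAdicRat p :=
  ⟨(q : ℚ) / (p : ℚ) ^ k, pAdicElem_mem p q k⟩

/-- The set `Ξ_p` of sequences `α` with `α n ∈ [0,1)` and `p α_{n+1} ≡ α_n mod 1`,
with `p α_{n+1} - α_n ∈ {0, …, p-1}`. -/
def XiSeq (p : ℕ) (α : ℕ → ℝ) : Prop :=
  (∀ n, α n ∈ Set.Ico (0 : ℝ) 1) ∧ ∀ n, ∃ j : ℕ, j < p ∧ (p : ℝ) * α (n + 1) - α n = j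

lemma red_exists (p : ℕ) (hp : 1 < p) (r : pAdicRat p) :
    ∃ (k : ℕ) (q : ℤ), IsReducedForm p (r : ℚ) q k := by
  classical
  have hp0 : (p : ℚ) ≠ 0 := by positivity
  have hex : ∃ k : ℕ, ∃ z : ℤ, (r : ℚ) * (p : ℚ) ^ k = z := by
    obtain ⟨z, k, h⟩ := r.2
    exact ⟨k, z, h⟩
  obtain ⟨z, hz⟩ := Nat.find_spec hex
  refine ⟨Nat.find hex, z, ?_, ?_⟩
  · rw [eq_div_iff (pow_ne_zero _ hp0)]; exact hz
  · by_contra! h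
    obtain ⟨h0, w, hw⟩ := h
    obtain ⟨m, hm⟩ := Nat.exists_eq_succ_of_ne_zero h0
    have hlt : m < Nat.find hex := by omega
    apply Nat.find_min hex hlt
    refine ⟨w, ?_⟩
    rw [hm, hw, Nat.succ_eq_add_one, pow_succ] at hz
    push_cast at hz
    apply mul_right_cancel₀ hp0
    linarith

lemma red_not_lt (p : ℕ) (hp : 1 < p) (r : ℚ) (q1 q2 : ℤ) (k1 k2 : ℕ)
    (h1 : IsReducedForm p r q1 k1) (h2 : IsReducedForm p r q2 k2) : ¬ k1 < k2 := by
  intro h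
  have hp0 : (p : ℚ) ≠ 0 := by positivity
  obtain ⟨d, rfl⟩ := Nat.exists_eq_add_of_lt h
  rcases h2.2 with h0 | h0
  · omega
  · apply h0
    refine ⟨q1 * (p : ℤ) ^ d, ?_⟩
    have e := h1.1.symm.trans h2.1
    rw [div_eq_div_iff (pow_ne_zero _ hp0) (pow_ne_zero _ hp0)] at e
    have : (q2 : ℚ) = p * (q1 * (p : ℚ) ^ d) := by
      apply mul_right_cancel₀ (pow_ne_zero k1 hp0)
      rw [← e]; ring
    exact_mod_cast this

lemma red_unique (p : ℕ) (hp : 1 < p) (r : ℚ) (q1 q2 : ℤ) (k1 k2 : ℕ)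
    (h1 : IsReducedForm p r q1 k1) (h2 : IsReducedForm p r q2 k2) : k1 = k2 := by
  have := red_not_lt p hp r q1 q2 k1 k2 h1 h2
  have := red_not_lt p hp r q2 q1 k2 k1 h2 h1
  omega

lemma red_add (p : ℕ) (hp : 1 < p) (r s : ℚ) (q1 q2 : ℤ) (k1 k2 : ℕ) (h : k1 < k2)
    (h1 : IsReducedForm p r q1 k1) (h2 : IsReducedForm p s q2 k2) :
    ∃ q, IsReducedForm p (r + s) q k2 := by
  have hp0 : (p : ℚ) ≠ 0 := by positivity
  obtain ⟨d, rfl⟩ := Nat.exists_eq_add_of_lt h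
  refine ⟨q1 * (p : ℤ) ^ (d + 1) + q2, ?_, Or.inr ?_⟩
  · rw [h1.1, h2.1]; push_cast; field_simp; ring
  · rcases h2.2 with h0 | h0
    · omega
    · intro hd
      apply h0
      have : (p : ℤ) ∣ q1 * (p : ℤ) ^ (d + 1) := Dvd.intro_left (q1 * (p : ℤ) ^ d) (by ring)
      exact (dvd_add_right this).1 hd

lemma trace_zero (p : ℕ) (hp : 1 < p) (J : ℕ → ℤ) (ξ : pAdicRat p → pAdicRat p → ℤ)
    (hξ : XiJFormula p J (fun r s => (ξ r s : ℚ))) (δ : ℤ × pAdicRat p → ℝ)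
    (hadd : ∀ a b : ℤ × pAdicRat p, δ (qOp p ξ a b) = δ a + δ b)
    (h1 : δ (1, 0) = 0) (hk : ∀ k : ℕ, δ (0, pAdicElem p 1 k) = 0) : ∀ x, δ x = 0 := by
  have hz0 : IsReducedForm p ((0 : pAdicRat p) : ℚ) 0 0 := ⟨by simp, Or.inl rfl⟩
  have hx0 : ∀ r, ξ 0 r = 0 := by
    intro r
    obtain ⟨k, q, hr⟩ := red_exists p hp r
    have H := hξ 0 r 0 0 q k hz0 hr
    have : (ξ 0 r : ℚ) = 0 := by
      rcases Nat.eq_zero_or_pos k with rfl | hpos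
      · have := H.2.2 rfl q 0 (by simpa using hr)
        simpa using this
      · simpa using H.1 hpos
    exact_mod_cast this
  have hzadd : ∀ (a b : ℤ) (r : pAdicRat p), δ (a + b, r) = δ (a, 0) + δ (b, r) := by
    intro a b r
    rw [← hadd]; simp [qOp, hx0]
  let g : ℤ →+ ℝ := AddMonoidHom.mk' (fun z => δ (z, 0)) (fun a b => hzadd a b 0)
  have hg : ∀ z : ℤ, δ (z, 0) = 0 := by
    intro z
    have : g z = z • g 1 := by rw [← map_zsmul]; simp
    have e : g 1 = 0 := h1
    rw [e] at this
    simpa [g] using this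
  have hr : ∀ z r, δ (z, r) = δ (0, r) := by
    intro z r
    have := hzadd z 0 r
    rwa [hg, zero_add, add_zero] at this
  let f : pAdicRat p →+ ℝ := AddMonoidHom.mk' (fun r => δ (0, r)) (by
    intro a b
    rw [← hadd]; simp only [qOp]; exact (hr _ _).symm)
  rintro ⟨z, r⟩
  rw [hr]
  obtain ⟨k, q, hq⟩ := red_exists p hp r
  have e : r = q • pAdicElem p 1 k := by
    apply Subtype.ext
    rw [hq.1]
    simp [pAdicElem, div_eq_mul_inv]
  have : f r = q • f (pAdicElem p 1 k) := by rw [← map_zsmul, ← e]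
  have e2 : f (pAdicElem p 1 k) = 0 := hk k
  rw [e2] at this
  simpa [f] using this

/-- For `p > 1`, `α ∈ Ξ_p` and `J_k = p^k α_k - α_0`, there is a unique
group homomorphism `τ : 𝒬_J → ℝ` with `τ(1,0) = 1` and `τ(0, 1/p^k) = α_k` for all `k`. -/
theorem qJ_unique_trace (p : ℕ) (hp : 1 < p) (α : ℕ → ℝ) (hα : XiSeq p α)
    (J : ℕ → ℤ) (hJ : ∀ k : ℕ, (J k : ℝ) = (p : ℝ) ^ k * α k - α 0)
    (ξ : pAdicRat p → pAdicRat p → ℤ)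
    (hξ : XiJFormula p J (fun r s => (ξ r s : ℚ))) :
    ∃! τ : ℤ × pAdicRat p → ℝ,
      (∀ a b : ℤ × pAdicRat p, τ (qOp p ξ a b) = τ a + τ b) ∧
      τ (1, 0) = 1 ∧
      ∀ k : ℕ, τ (0, pAdicElem p 1 k) = α k := by
  choose K Q hKQ using red_exists p hp
  have hpR : (p : ℝ) ≠ 0 := by positivity
  have hK : ∀ (r : pAdicRat p) (q : ℤ) (k : ℕ), IsReducedForm p (r : ℚ) q k → K r = k :=
    fun r q k h => red_unique p hp r _ _ _ _ (hKQ r) h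
  refine existsUnique_of_exists_of_unique
    ⟨fun x => x.1 + ((x.2 : ℚ) : ℝ) * (J (K x.2) + α 0), ?_, ?_, ?_⟩ ?_
  · rintro ⟨a, r⟩ ⟨b, s⟩
    have H := hξ r s _ _ _ _ (hKQ r) (hKQ s)
    rw [← (hKQ r).1, ← (hKQ s).1] at H
    beta_reduce at H
    simp only [qOp]
    have key : (ξ r s : ℚ) = r * J (K r) + s * J (K s) - (r + s) * J (K (r + s)) := by
      rcases lt_trichotomy (K r) (K s) with h | h | h
      · obtain ⟨q, hq⟩ := red_add p hp _ _ _ _ _ _ h (hKQ r) (hKQ s)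
        rw [hK (r + s) q _ hq, H.1 h]; ring
      · have := H.2.2 h _ _ (hKQ (r + s))
        rw [← (hKQ (r + s)).1] at this
        rw [this, ← h]; push_cast; ring
      · obtain ⟨q, hq⟩ := red_add p hp _ _ _ _ _ _ h (hKQ s) (hKQ r)
        rw [add_comm] at hq
        rw [hK (r + s) q _ hq, H.2.1 h]; ring
    have keyR : (ξ r s : ℝ) = ((r : ℚ) : ℝ) * J (K r) + ((s : ℚ) : ℝ) * J (K s)
        - (((r : ℚ) : ℝ) + ((s : ℚ) : ℝ)) * J (K (r + s)) := by
      exact_mod_cast congrArg (fun x : ℚ => (x : ℝ)) key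
    push_cast
    rw [keyR]; ring
  · simp
  · intro k
    have : K (pAdicElem p 1 k) = k := by
      apply hK _ 1
      refine ⟨rfl, Or.inr ?_⟩
      intro h
      have := Int.le_of_dvd one_pos h
      omega
    simp only [this, hJ]
    simp [pAdicElem]
    field_simp
  · rintro τ σ ⟨ha, h1, hk⟩ ⟨ha', h1', hk'⟩
    funext x
    have := trace_zero p hp J ξ hξ (fun x => τ x - σ x)
      (fun a b => by simp only [ha, ha']; ring) (by simp [h1, h1']) (by simp [hk, hk']) x
    exact sub_eq_zero.1 this
end

section
/- Let p be a prime number, let α_0 ∈ [0,1), and let b : ℕ → {0,1,…,p−1}. Define α_n = (α_0 + Σ_{j=0}^{n−1} b_j·p^j)/p^n for n ∈ ℕ, and let x = Σ_{j=0}^∞ b_j·p^j ∈ ℤ_p (the series converging in ℚ_p). Then for all j1, j4 ∈ ℤ and all k1, k4 ∈ ℕ: exp(2πi·α_0·j1·j4/p^{k1+k4}) · exp(2πi·{x·j1·j4/p^{k1+k4}}_p) = exp(2πi·α_{k1+k4}·j1·j4). -/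
open scoped Real

lemma aux_int (p : ℕ) [Fact p.Prime] (r : ℚ) (hr : r ∈ pAdicRat p)
    (hn : ‖(r : ℚ_[p])‖ ≤ 1) : ∃ m : ℤ, r = m := by
  obtain ⟨z, k, h⟩ := hr
  have hp : (p : ℚ) ≠ 0 := by exact_mod_cast (Fact.out : p.Prime).ne_zero
  have h2 : (r : ℚ_[p]) * (p : ℚ_[p]) ^ k = z := by exact_mod_cast congrArg (Rat.cast : ℚ → ℚ_[p]) h
  have h3 : ‖(z : ℚ_[p])‖ ≤ (p : ℝ) ^ (-(k : ℤ)) := by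
    rw [← h2, norm_mul, norm_pow, Padic.norm_p, zpow_neg, zpow_natCast, inv_pow]
    exact mul_le_of_le_one_left (by positivity) hn
  rw [Padic.norm_int_le_pow_iff_dvd] at h3
  obtain ⟨m, rfl⟩ := h3
  refine ⟨m, ?_⟩
  push_cast at h
  have : r * (p : ℚ) ^ k = m * (p : ℚ) ^ k := by rw [h]; ring
  exact mul_right_cancel₀ (pow_ne_zero k hp) this

lemma aux_summable (p : ℕ) [Fact p.Prime] (b : ℕ → ℕ) :
    Summable fun j : ℕ => (b j : ℚ_[p]) * (p : ℚ_[p]) ^ j := by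
  refine Summable.of_norm_bounded (g := fun j => ‖(p : ℚ_[p])‖ ^ j)
    (summable_geometric_of_lt_one (norm_nonneg _) Padic.norm_p_lt_one) fun j => ?_
  rw [norm_mul, norm_pow]
  exact mul_le_of_le_one_left (by positivity) (by exact_mod_cast Padic.norm_int_le_one (p := p) (b j : ℤ))

lemma aux_norm (p : ℕ) [Fact p.Prime] (b : ℕ → ℕ) :
    ‖∑' j : ℕ, (b j : ℚ_[p]) * (p : ℚ_[p]) ^ j‖ ≤ 1 := by
  refine le_of_tendsto (aux_summable p b).hasSum.tendsto_sum_nat.norm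
    (Filter.Eventually.of_forall fun n => ?_)
  have := Padic.norm_int_le_one (p := p) ((∑ j ∈ Finset.range n, b j * p ^ j : ℕ) : ℤ)
  push_cast at this
  exact this

lemma aux_tail (p : ℕ) [Fact p.Prime] (b : ℕ → ℕ) (n : ℕ) :
    ∑' j : ℕ, (b j : ℚ_[p]) * (p : ℚ_[p]) ^ j =
      ∑ j ∈ Finset.range n, (b j : ℚ_[p]) * (p : ℚ_[p]) ^ j +
        (p : ℚ_[p]) ^ n * ∑' j : ℕ, (b (j + n) : ℚ_[p]) * (p : ℚ_[p]) ^ j := by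
  rw [← (aux_summable p b).sum_add_tsum_nat_add n, ← tsum_mul_left]
  congr 1
  refine tsum_congr fun j => ?_
  ring

/-- Let `p` be prime, `α_0 ∈ [0,1)`, `b : ℕ → {0,…,p-1}`, set
`α_n = (α_0 + Σ_{j<n} b_j p^j)/p^n` and `x = Σ_j b_j p^j ∈ ℤ_p ⊆ ℚ_p`. Then for all
`j1, j4 ∈ ℤ` and `k1, k4 ∈ ℕ`,
`exp(2πi α_0 j1 j4 / p^{k1+k4}) exp(2πi {x j1 j4 / p^{k1+k4}}_p) = exp(2πi α_{k1+k4} j1 j4)`. -/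
theorem cocycle_matching (p : ℕ) [Fact p.Prime]
    (frac : ℚ_[p] → ℚ)
    (hfrac : ∀ y : ℚ_[p], frac y ∈ pAdicRat p ∧ 0 ≤ frac y ∧ frac y < 1 ∧
      ‖y - ((frac y : ℚ) : ℚ_[p])‖ ≤ 1)
    (α0 : ℝ) (hα0 : 0 ≤ α0 ∧ α0 < 1)
    (b : ℕ → ℕ) (hb : ∀ j, b j < p)
    (α : ℕ → ℝ)
    (hα : ∀ n : ℕ, α n = (α0 + ∑ j ∈ Finset.range n, (b j : ℝ) * (p : ℝ) ^ j) / (p : ℝ) ^ n)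
    (x : ℚ_[p]) (hx : x = ∑' j : ℕ, (b j : ℚ_[p]) * (p : ℚ_[p]) ^ j) :
    ∀ (j1 j4 : ℤ) (k1 k4 : ℕ),
      Circle.exp (2 * π * (α0 * (j1 : ℝ) * (j4 : ℝ) / (p : ℝ) ^ (k1 + k4))) *
        Circle.exp (2 * π *
          ((frac (x * ((j1 : ℚ_[p]) * (j4 : ℚ_[p])) / (p : ℚ_[p]) ^ (k1 + k4)) : ℚ) : ℝ)) =
      Circle.exp (2 * π * (α (k1 + k4) * (j1 : ℝ) * (j4 : ℝ))) := by
  intro j1 j4 k1 k4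
  set n := k1 + k4
  set y := x * ((j1 : ℚ_[p]) * (j4 : ℚ_[p])) / (p : ℚ_[p]) ^ n with hy
  obtain ⟨h1, -, -, h4⟩ := hfrac y
  have hpQ : (p : ℚ) ≠ 0 := by exact_mod_cast (Fact.out : p.Prime).ne_zero
  have hpP : (p : ℚ_[p]) ≠ 0 := by exact_mod_cast (Fact.out : p.Prime).ne_zero
  have hpR : (p : ℝ) ≠ 0 := by exact_mod_cast (Fact.out : p.Prime).ne_zero
  set q : ℚ := (∑ j ∈ Finset.range n, (b j : ℚ) * (p : ℚ) ^ j) * (j1 * j4) / (p : ℚ) ^ n with hq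
  have hqm : q ∈ pAdicRat p := by
    refine ⟨(∑ j ∈ Finset.range n, (b j : ℤ) * (p : ℤ) ^ j) * (j1 * j4), n, ?_⟩
    rw [hq, div_mul_cancel₀ _ (pow_ne_zero n hpQ)]
    push_cast
    rfl
  have hyq : ‖y - (q : ℚ_[p])‖ ≤ 1 := by
    have : y - (q : ℚ_[p]) =
        (∑' j : ℕ, (b (j + n) : ℚ_[p]) * (p : ℚ_[p]) ^ j) * ((j1 * j4 : ℤ) : ℚ_[p]) := by
      rw [hy, hq, hx, aux_tail p b n]
      push_cast
      field_simp
      ring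
    rw [this, norm_mul]
    exact mul_le_one₀ (aux_norm p fun j => b (j + n)) (norm_nonneg _) (Padic.norm_int_le_one _)
  obtain ⟨m, hm⟩ := aux_int p (frac y - q) ((pAdicRat p).sub_mem h1 hqm) (by
    have : ((frac y - q : ℚ) : ℚ_[p]) = (y - (q : ℚ_[p])) - (y - (frac y : ℚ_[p])) := by
      push_cast; ring
    rw [this]
    have := Padic.nonarchimedean (y - (q : ℚ_[p])) (-(y - (frac y : ℚ_[p])))
    rw [norm_neg, ← sub_eq_add_neg] at this
    exact this.trans (max_le hyq h4))
  rw [← Circle.exp_add, Circle.exp_eq_exp]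
  refine ⟨m, ?_⟩
  have hf : ((frac y : ℚ) : ℝ) = m + (q : ℝ) := by
    have : frac y = m + q := by linarith
    rw [this]; push_cast; rfl
  rw [hf, hα n, hq]
  push_cast
  field_simp
  ring
end
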